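/- Let f : X → Y be a fibration between compact gluing cubespaces and s ≥ 0. Then the projection π_{f,s} : X → X/∼_{f,s} is a fibration, and f factors through an s-fibration g : X/∼_{f,s} → Y, i.e., f = g ∘ π_{f,s} with g a fibration having (s+1)-uniqueness. -/

import Mathlib

open Function Set

/-- The all-ones vertex `1⃗` of the discrete cube `{0,1}^k`. -/
def topVtx (k : ℕ) : Fin k → Bool := fun _ => true

/-- A family of cube sets on a space `X`: for each `k`, a set of `k`-configurations. -/
structure CubeFamily (X : Type*) where
  cubes : ∀ k : ℕ, Set ((Fin k → Bool) → X)

/-- A morphism of discrete cubes: each coordinate function is constantly `0`,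
constantly `1`, a coordinate `ω i`, or a negated coordinate `!ω i`. -/
def IsDiscreteCubeMorphism {k l : ℕ} (ρ : (Fin k → Bool) → (Fin l → Bool)) : Prop :=
  ∀ j : Fin l, (∀ ω, ρ ω j = false) ∨ (∀ ω, ρ ω j = true) ∨
    (∃ i : Fin k, ∀ ω, ρ ω j = ω i) ∨ (∃ i : Fin k, ∀ ω, ρ ω j = !(ω i))

/-- The cubespace axioms: cube sets are closed, `C^0(X) = X`, and cubes are stable
under precomposition with morphisms of discrete cubes. -/
def CubeFamily.IsCubespace {X : Type*} [TopologicalSpace X] (S : CubeFamily X) : Prop :=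
  (∀ k, IsClosed (S.cubes k)) ∧ S.cubes 0 = Set.univ ∧
    ∀ {k l : ℕ} (ρ : (Fin k → Bool) → (Fin l → Bool)), IsDiscreteCubeMorphism ρ →
      ∀ c ∈ S.cubes l, (fun ω => c (ρ ω)) ∈ S.cubes k

/-- A cubespace morphism: a continuous map sending cubes to cubes. -/
def IsMorphism {X Y : Type*} [TopologicalSpace X] [TopologicalSpace Y]
    (S : CubeFamily X) (T : CubeFamily Y) (f : X → Y) : Prop :=
  Continuous f ∧ ∀ k, ∀ c ∈ S.cubes k, (fun ω => f (c ω)) ∈ T.cubes k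

/-- `lam` is a `k`-corner: each lower face `{ω : ω i = 0}` restricts to a `(k-1)`-cube.
(The restriction of `lam` to the face `{ω : ω i = 0}` is a `(k-1)`-cube iff the
degenerate configuration `ω ↦ lam (update ω i false)` is a `k`-cube, by the
discrete-cube-morphism axiom; the value of `lam` at `topVtx k` is irrelevant here.) -/
def IsCubeCorner {X : Type*} (S : CubeFamily X) {k : ℕ} (lam : (Fin k → Bool) → X) : Prop :=
  ∀ i : Fin k, (fun ω => lam (Function.update ω i false)) ∈ S.cubes k

/-- Relative `k`-completion for `f : X → Y`: every `k`-corner in `X` whose `f`-image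
extends to a `k`-cube `c` of `Y` can be completed to a `k`-cube of `X` lying over `c`. -/
def HasCompletionAt {X Y : Type*} (S : CubeFamily X) (T : CubeFamily Y) (f : X → Y)
    (k : ℕ) : Prop :=
  ∀ (lam : (Fin k → Bool) → X) (c : (Fin k → Bool) → Y), IsCubeCorner S lam → c ∈ T.cubes k →
    (∀ ω, ω ≠ topVtx k → f (lam ω) = c ω) →
    ∃ c₀ ∈ S.cubes k, (∀ ω, ω ≠ topVtx k → c₀ ω = lam ω) ∧ (fun ω => f (c₀ ω)) = c

/-- A fibration: a cubespace morphism with `k`-completion for all `k ≥ 0`. -/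
def IsFibration {X Y : Type*} [TopologicalSpace X] [TopologicalSpace Y]
    (S : CubeFamily X) (T : CubeFamily Y) (f : X → Y) : Prop :=
  IsMorphism S T f ∧ ∀ k, HasCompletionAt S T f k

/-- Relative `k`-uniqueness: two `k`-cubes agreeing off the top vertex with equal
`f`-images are equal. -/
def HasUniquenessAt {X Y : Type*} (S : CubeFamily X) (T : CubeFamily Y) (f : X → Y)
    (k : ℕ) : Prop :=
  ∀ c ∈ S.cubes k, ∀ c' ∈ S.cubes k, (∀ ω, ω ≠ topVtx k → c ω = c' ω) →
    (fun ω => f (c ω)) = (fun ω => f (c' ω)) → c = c'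

/-- An `s`-fibration: a fibration with `(s+1)`-uniqueness. -/
def IsSFibration {X Y : Type*} [TopologicalSpace X] [TopologicalSpace Y]
    (S : CubeFamily X) (T : CubeFamily Y) (f : X → Y) (s : ℕ) : Prop :=
  IsFibration S T f ∧ HasUniquenessAt S T f (s + 1)

/-- Absolute fibrancy: every `k`-corner completes to a `k`-cube. -/
def IsFibrant {X : Type*} (S : CubeFamily X) : Prop :=
  ∀ (k : ℕ) (lam : (Fin k → Bool) → X), IsCubeCorner S lam →
    ∃ c₀ ∈ S.cubes k, ∀ ω, ω ≠ topVtx k → c₀ ω = lam ω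

/-- Absolute `k`-uniqueness. -/
def HasUnique {X : Type*} (S : CubeFamily X) (k : ℕ) : Prop :=
  ∀ c ∈ S.cubes k, ∀ c' ∈ S.cubes k, (∀ ω, ω ≠ topVtx k → c ω = c' ω) → c = c'

/-- Ergodicity: every pair of points is a `1`-cube. -/
def IsErgodic {X : Type*} (S : CubeFamily X) : Prop := S.cubes 1 = Set.univ

/-- Concatenation `[c₁, c₂]` of two `k`-configurations along the last coordinate. -/
def concatCube {X : Type*} {k : ℕ} (c₁ c₂ : (Fin k → Bool) → X) :
    (Fin (k + 1) → Bool) → X :=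
  fun ω => if ω (Fin.last k) = true then c₂ (fun i => ω i.castSucc)
           else c₁ (fun i => ω i.castSucc)

/-- The gluing property. -/
def IsGluing {X : Type*} (S : CubeFamily X) : Prop :=
  ∀ (k : ℕ) (c₁ c₂ c₃ : (Fin k → Bool) → X), c₁ ∈ S.cubes k → c₂ ∈ S.cubes k →
    c₃ ∈ S.cubes k → concatCube c₁ c₂ ∈ S.cubes (k + 1) →
    concatCube c₂ c₃ ∈ S.cubes (k + 1) → concatCube c₁ c₃ ∈ S.cubes (k + 1)

/-- The `s`-th canonical relation `x ∼ₛ x'`. -/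
def CanonRel {X : Type*} (S : CubeFamily X) (s : ℕ) (x x' : X) : Prop :=
  ∃ c ∈ S.cubes (s + 1), ∃ c' ∈ S.cubes (s + 1),
    (∀ ω, ω ≠ topVtx (s + 1) → c ω = c' ω) ∧ c (topVtx (s + 1)) = x ∧ c' (topVtx (s + 1)) = x'

/-- The `s`-th canonical relation relative to `f` : `x ∼_{f,s} x'`. -/
def RelCanonRel {X Y : Type*} (S : CubeFamily X) (f : X → Y) (s : ℕ) (x x' : X) : Prop :=
  CanonRel S s x x' ∧ f x = f x'

/-- The quotient cubespace `X/∼_{f,s}`: cubes are images of cubes of `X`. -/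
def quotFamilyRel {X Y : Type*} (S : CubeFamily X) (f : X → Y) (s : ℕ) :
    CubeFamily (Quot (RelCanonRel S f s)) :=
  ⟨fun k => {d | ∃ c ∈ S.cubes k, d = fun ω => Quot.mk _ (c ω)}⟩

/-!
Gluing lets one slide a change of a cube at a single vertex along the coordinate directions. Hence
whether the value of a `k`-cube at a vertex may be replaced by `y` depends only on the value there,
not on the rest of the cube. Taking `k = s + 1`, values of cubes of dimension at most `s + 1` may be
replaced freely within `∼ₛ`-classes, whereas in dimension at least `s + 1` the class of the top
vertex is determined by the classes of the others. The first fact completes corners along the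
projection in low dimensions, and the second turns a completion along `f` into one along the
projection in high dimensions. Finally, the second factor of a fibration through a surjective
fibration is itself a fibration, because corners lift one vertex at a time.
-/

/-- The combinatorial cubespace axiom: cube sets are stable under precomposition with morphisms of
discrete cubes. It is the part of `CubeFamily.IsCubespace` that involves no topology and passes
directly to quotients. -/
def CubeFamily.IsStable {X : Type*} (S : CubeFamily X) : Prop :=
  ∀ ⦃k l : ℕ⦄ ⦃ρ : (Fin k → Bool) → (Fin l → Bool)⦄, IsDiscreteCubeMorphism ρ →
    ∀ ⦃c : (Fin l → Bool) → X⦄, c ∈ S.cubes l → (fun ω => c (ρ ω)) ∈ S.cubes k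

section DiscreteCubes

variable {k l : ℕ}

theorem isDiscreteCubeMorphism_of_forall {ρ : (Fin k → Bool) → (Fin l → Bool)}
    (h : ∀ j, (∃ b, ∀ ω, ρ ω j = b) ∨ ∃ i, ∃ φ : Bool → Bool, ∀ ω, ρ ω j = φ (ω i)) :
    IsDiscreteCubeMorphism ρ := by
  have unary : ∀ φ : Bool → Bool,
      (∀ b, φ b = false) ∨ (∀ b, φ b = true) ∨ (∀ b, φ b = b) ∨ ∀ b, φ b = !b := by decide
  intro j
  obtain ⟨_ | _, hb⟩ | ⟨i, φ, hφ⟩ := h j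
  · exact .inl hb
  · exact .inr (.inl hb)
  · simp only [hφ]
    exact (unary φ).imp (fun h ω => h _) (.imp (fun h ω => h _)
      (.imp (fun h => ⟨i, fun ω => h _⟩) fun h => ⟨i, fun ω => h _⟩))

theorem isDiscreteCubeMorphism_pointwise (φ : Fin k → Bool → Bool) :
    IsDiscreteCubeMorphism fun (ω : Fin k → Bool) i => φ i (ω i) :=
  isDiscreteCubeMorphism_of_forall fun i => .inr ⟨i, φ i, fun _ => rfl⟩

theorem isDiscreteCubeMorphism_reindex (e : Fin l → Fin k) :
    IsDiscreteCubeMorphism fun (ω : Fin k → Bool) j => ω (e j) :=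
  isDiscreteCubeMorphism_of_forall fun j => .inr ⟨e j, id, fun _ => rfl⟩

theorem isDiscreteCubeMorphism_update (i : Fin k) (φ : Bool → Bool) :
    IsDiscreteCubeMorphism fun ω : Fin k → Bool => update ω i (φ (ω i)) := by
  refine isDiscreteCubeMorphism_of_forall fun j => .inr ?_
  obtain rfl | hj := eq_or_ne j i
  · exact ⟨j, φ, fun ω => update_self ..⟩
  · exact ⟨j, id, fun ω => update_of_ne hj ..⟩

theorem isDiscreteCubeMorphism_snoc (b : Bool) :
    IsDiscreteCubeMorphism fun η : Fin k → Bool => (Fin.snoc η b : Fin (k + 1) → Bool) := by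
  refine isDiscreteCubeMorphism_of_forall fun j => ?_
  induction j using Fin.lastCases with
  | last => exact .inl ⟨b, fun η => Fin.snoc_last (α := fun _ => Bool) b η⟩
  | cast j => exact .inr ⟨j, id, fun η => Fin.snoc_castSucc (α := fun _ => Bool) b η j⟩

theorem snoc_true_eq_topVtx_iff {η : Fin k → Bool} :
    (Fin.snoc η true : Fin (k + 1) → Bool) = topVtx (k + 1) ↔ η = topVtx k := by
  simp [funext_iff, Fin.forall_fin_succ', topVtx]

/-- The face `{η | η ≤ ω}` is the image of a discrete cube under `ρ`, with retraction `ψ`. -/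
theorem exists_face_chart (ω : Fin k → Bool) :
    ∃ (m : ℕ) (ρ : (Fin m → Bool) → (Fin k → Bool)) (ψ : (Fin k → Bool) → (Fin m → Bool)),
      IsDiscreteCubeMorphism ρ ∧ IsDiscreteCubeMorphism ψ ∧ LeftInverse ψ ρ ∧
        (∀ ξ, ρ (ψ ξ) = ξ ⊓ ω) ∧ (∀ η θ, ρ (η ⊓ θ) = ρ η ⊓ ρ θ) ∧ ρ (topVtx m) = ω := by
  let e := Fintype.equivFin {i // ω i = true}
  refine ⟨_, fun η i => if h : ω i = true then η (e ⟨i, h⟩) else false,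
    fun ξ j => ξ (e.symm j), ?_, isDiscreteCubeMorphism_reindex _, ?_, ?_, ?_, ?_⟩
  · refine isDiscreteCubeMorphism_of_forall fun i => ?_
    by_cases hi : ω i = true
    · exact .inr ⟨e ⟨i, hi⟩, id, fun η => dif_pos hi⟩
    · exact .inl ⟨false, fun η => dif_neg hi⟩
  · intro η
    funext j
    simp [(e.symm j).2]
  · intro ξ
    funext i
    by_cases hi : ω i = true <;> simp [hi]
  · intro η θ
    funext i
    by_cases hi : ω i = true <;> simp [hi]
  · funext i
    by_cases hi : ω i = true <;> simp [hi, topVtx]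

end DiscreteCubes

section Gluing

variable {X : Type*} {S : CubeFamily X} {k : ℕ}

theorem concatCube_snoc (A B : (Fin (k + 1) → Bool) → X) :
    concatCube (fun η => A (Fin.snoc η false)) (fun η => B (Fin.snoc η true)) =
      fun ω => if ω (Fin.last k) = true then B ω else A ω := by
  funext ω
  have snoc_init : ∀ b, ω (Fin.last k) = b →
      (Fin.snoc (fun i : Fin k => ω i.castSucc) b : Fin (k + 1) → Bool) = ω := by
    rintro _ rfl
    exact Fin.snoc_init_self ω
  unfold concatCube
  split_ifs with h
  · exact congrArg B (snoc_init true h)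
  · exact congrArg A (snoc_init false (by simpa using h))

theorem IsGluing.ite_last_mem (hg : IsGluing S) (hS : S.IsStable)
    {A B : (Fin (k + 1) → Bool) → X} (hA : A ∈ S.cubes (k + 1)) (hB : B ∈ S.cubes (k + 1))
    (hAB : ∀ η : Fin k → Bool, A (Fin.snoc η true) = B (Fin.snoc η false)) :
    (fun ω => if ω (Fin.last k) = true then B ω else A ω) ∈ S.cubes (k + 1) := by
  have face (b : Bool) {D} (hD : D ∈ S.cubes (k + 1)) :
      (fun η : Fin k → Bool => D (Fin.snoc η b)) ∈ S.cubes k :=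
    hS (isDiscreteCubeMorphism_snoc b) hD
  rw [← concatCube_snoc]
  refine hg k _ _ _ (face false hA) (face true hA) (face true hB) ?_ ?_
  · rw [concatCube_snoc]
    simpa only [ite_self] using hA
  · simp only [hAB, concatCube_snoc]
    simpa only [ite_self] using hB

theorem IsGluing.ite_true_mem (hg : IsGluing S) (hS : S.IsStable) (i : Fin k)
    {A B : (Fin k → Bool) → X} (hA : A ∈ S.cubes k) (hB : B ∈ S.cubes k)
    (hAB : ∀ ω, A (update ω i true) = B (update ω i false)) :
    (fun ω => if ω i = true then B ω else A ω) ∈ S.cubes k := by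
  obtain _ | n := k
  · exact i.elim0
  let σ := Equiv.swap i (Fin.last n)
  have perm {D} (hD : D ∈ S.cubes (n + 1)) : (fun ω => D (ω ∘ σ)) ∈ S.cubes (n + 1) :=
    hS (isDiscreteCubeMorphism_reindex σ) hD
  have snoc_comp (η : Fin n → Bool) (b : Bool) :
      (Fin.snoc η b : Fin (n + 1) → Bool) ∘ σ = update ((Fin.snoc η true : _ → Bool) ∘ σ) i b := by
    rw [← Fin.update_snoc_last (x := true), update_comp_equiv]
    simp [σ]
  have glued := hg.ite_last_mem hS (perm hA) (perm hB) fun η => by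
    rw [snoc_comp η true, snoc_comp η false, hAB]
  simpa [σ, comp_assoc, ← Equiv.coe_trans] using perm glued

theorem IsGluing.ite_mem (hg : IsGluing S) (hS : S.IsStable) (i : Fin k) (b : Bool)
    {A B : (Fin k → Bool) → X} (hA : A ∈ S.cubes k) (hB : B ∈ S.cubes k)
    (hAB : ∀ ω, A (update ω i b) = B (update ω i !b)) :
    (fun ω => if ω i = b then B ω else A ω) ∈ S.cubes k := by
  cases b
  · simpa [← Bool.not_eq_true, ite_not] using
      hg.ite_true_mem hS i hB hA fun ω => (hAB ω).symm
  · exact hg.ite_true_mem hS i hA hB hAB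

theorem IsGluing.update_collapse_mem_iff (hg : IsGluing S) (hS : S.IsStable)
    {c : (Fin k → Bool) → X} (hc : c ∈ S.cubes k) (v : Fin k → Bool) (i : Fin k) (y : X) :
    update (fun ω => c (update ω i (v i))) v y ∈ S.cubes k ↔ update c v y ∈ S.cubes k := by
  have update_not_ne (ω : Fin k → Bool) : update ω i (!v i) ≠ v := fun h => by
    simpa using congrFun h i
  constructor <;> intro h
  · convert hg.ite_mem hS i (v i) hc h fun ω => by simp [update_of_ne (update_not_ne ω)] using 1
    funext ω
    obtain rfl | hω := eq_or_ne ω v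
    · simp
    · by_cases hi : ω i = v i
      · simp [update_of_ne hω, ← hi]
      · simp [update_of_ne hω, hi]
  · -- Gluing the reflection of `c` in direction `i` to `c` cancels its dependence on `ω i`.
    have flip := hS (isDiscreteCubeMorphism_update i not) hc
    convert hg.ite_mem hS i (v i) flip h fun ω => by simp [update_of_ne (update_not_ne ω)] using 1
    funext ω
    obtain rfl | hω := eq_or_ne ω v
    · simp
    · by_cases hi : ω i = v i
      · simp [update_of_ne hω, ← hi]
      · simp [update_of_ne hω, Bool.eq_not.2 hi]

theorem IsGluing.update_const_mem_iff (hg : IsGluing S) (hS : S.IsStable)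
    {c : (Fin k → Bool) → X} (hc : c ∈ S.cubes k) (v : Fin k → Bool) (y : X) :
    update (fun _ => c v) v y ∈ S.cubes k ↔ update c v y ∈ S.cubes k := by
  have collapse (A : Finset (Fin k)) :
      update (fun ω => c (A.piecewise v ω)) v y ∈ S.cubes k ↔ update c v y ∈ S.cubes k := by
    induction A using Finset.induction_on generalizing c with
    | empty => simp
    | insert i A _ ih =>
      simp only [Finset.piecewise_insert]
      exact (ih (hS (isDiscreteCubeMorphism_update i fun _ => v i) hc)).trans
        (hg.update_collapse_mem_iff hS hc v i y)
  simpa using collapse Finset.univ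

end Gluing

section CanonicalRelation

variable {X : Type*} {S : CubeFamily X} {k s t : ℕ} {x y z : X}

theorem CubeFamily.IsStable.const_mem (hS : S.IsStable) (hS₀ : S.cubes 0 = univ) (k : ℕ) (x : X) :
    (fun _ => x) ∈ S.cubes k :=
  hS (ρ := fun _ => Fin.elim0) (fun j => j.elim0) (c := fun _ => x) (hS₀ ▸ mem_univ _)

theorem CanonRel.refl (hS : S.IsStable) (hS₀ : S.cubes 0 = univ) (s : ℕ) (x : X) :
    CanonRel S s x x :=
  have hx := hS.const_mem hS₀ (s + 1) x
  ⟨_, hx, _, hx, fun _ _ => rfl, rfl, rfl⟩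

theorem CanonRel.symm : CanonRel S s x y → CanonRel S s y x :=
  fun ⟨c, hc, c', hc', h, hx, hy⟩ => ⟨c', hc', c, hc, fun ω hω => (h ω hω).symm, hy, hx⟩

theorem CanonRel.update_const_mem (hS : S.IsStable) (hg : IsGluing S) (h : CanonRel S s x y)
    (v : Fin (s + 1) → Bool) : update (fun _ => x) v y ∈ S.cubes (s + 1) := by
  obtain ⟨c, hc, c', hc', hcc', rfl, rfl⟩ := h
  have at_top : update (fun _ => c (topVtx _)) (topVtx _) (c' (topVtx _)) ∈ S.cubes (s + 1) := by
    rw [hg.update_const_mem_iff hS hc, update_eq_iff.2 ⟨rfl, hcc'⟩]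
    exact hc'
  convert hS (isDiscreteCubeMorphism_pointwise fun i b => b == v i) at_top using 1
  funext ω
  simp [update_apply, funext_iff, topVtx]

theorem CanonRel.trans (hS : S.IsStable) (hg : IsGluing S) (hxy : CanonRel S s x y)
    (hyz : CanonRel S s y z) : CanonRel S s x z :=
  ⟨_, hxy.symm.update_const_mem hS hg (topVtx _), _, hyz.update_const_mem hS hg (topVtx _),
    fun ω hω => by rw [update_of_ne hω, update_of_ne hω], update_self .., update_self ..⟩

theorem CanonRel.of_succ (hS : S.IsStable) (h : CanonRel S (s + 1) x y) : CanonRel S s x y := by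
  obtain ⟨c, hc, c', hc', hcc', rfl, rfl⟩ := h
  refine ⟨_, hS (isDiscreteCubeMorphism_snoc true) hc, _,
    hS (isDiscreteCubeMorphism_snoc true) hc',
    fun ω hω => hcc' _ (snoc_true_eq_topVtx_iff.not.2 hω), ?_, ?_⟩ <;>
  rw [snoc_true_eq_topVtx_iff.2 rfl]

theorem CanonRel.mono (hS : S.IsStable) (hts : t ≤ s) (h : CanonRel S s x y) :
    CanonRel S t x y := by
  induction s, hts using Nat.le_induction with
  | base => exact h
  | succ s _ ih => exact ih (h.of_succ hS)

theorem IsGluing.mem_cubes_succ_of_canonRel (hg : IsGluing S) (hS : S.IsStable)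
    {c c' : (Fin (s + 1) → Bool) → X} (hc : c ∈ S.cubes (s + 1))
    (h : ∀ ω, CanonRel S s (c ω) (c' ω)) : c' ∈ S.cubes (s + 1) := by
  have replaced (A : Finset (Fin (s + 1) → Bool)) : A.piecewise c' c ∈ S.cubes (s + 1) := by
    induction A using Finset.induction_on with
    | empty => simpa using hc
    | insert v A hv ih =>
      rw [Finset.piecewise_insert, ← hg.update_const_mem_iff hS ih,
        Finset.piecewise_eq_of_notMem _ _ _ hv]
      exact (h v).update_const_mem hS hg v
  simpa using replaced Finset.univ

theorem IsGluing.mem_cubes_of_canonRel (hg : IsGluing S) (hS : S.IsStable)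
    (hS₀ : S.cubes 0 = univ) (hk : k ≤ s + 1) {c c' : (Fin k → Bool) → X} (hc : c ∈ S.cubes k)
    (h : ∀ ω, CanonRel S s (c ω) (c' ω)) : c' ∈ S.cubes k := by
  obtain _ | k := k
  · exact hS₀ ▸ mem_univ c'
  · exact hg.mem_cubes_succ_of_canonRel hS hc fun ω => (h ω).mono hS (Nat.le_of_succ_le_succ hk)

theorem IsGluing.canonRel_topVtx (hg : IsGluing S) (hS : S.IsStable) (hS₀ : S.cubes 0 = univ)
    (hk : s + 1 ≤ k) {c c' : (Fin k → Bool) → X} (hc : c ∈ S.cubes k) (hc' : c' ∈ S.cubes k)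
    (h : ∀ ω, ω ≠ topVtx k → CanonRel S s (c ω) (c' ω)) :
    CanonRel S s (c (topVtx k)) (c' (topVtx k)) := by
  induction k, hk using Nat.le_induction with
  | base =>
    have hmixed : update c' (topVtx _) (c (topVtx _)) ∈ S.cubes (s + 1) := by
      refine hg.mem_cubes_succ_of_canonRel hS hc fun ω => ?_
      obtain rfl | hω := eq_or_ne ω (topVtx _)
      · rw [update_self]
        exact .refl hS hS₀ s _
      · rw [update_of_ne hω]
        exact h ω hω
    exact ⟨_, hmixed, c', hc', fun ω hω => update_of_ne hω .., update_self .., rfl⟩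
  | succ k _ ih =>
    have upper := ih (hS (isDiscreteCubeMorphism_snoc true) hc)
      (hS (isDiscreteCubeMorphism_snoc true) hc')
      fun ω hω => h _ (snoc_true_eq_topVtx_iff.not.2 hω)
    rwa [snoc_true_eq_topVtx_iff.2 rfl] at upper

end CanonicalRelation

section CornerLifting

theorem exists_forall_of_exists_update {ι α : Type*} [PartialOrder ι] [WellFoundedLT ι]
    [DecidableEq ι] [Nonempty α] {P : ι → (ι → α) → Prop}
    (hlocal : ∀ i f g, (∀ j ≤ i, f j = g j) → P i f → P i g)
    (hextend : ∀ i f, (∀ j < i, P j f) → ∃ a, P i (update f i a)) :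
    ∃ f, ∀ i, P i f := by
  classical
  let below (i : ι) (f : ∀ j, j < i → α) (j : ι) : α :=
    if hj : j < i then f j hj else Classical.arbitrary α
  let F : ι → α := wellFounded_lt.fix fun i f =>
    Classical.epsilon fun a => P i (update (below i f) i a)
  refine ⟨F, fun i => ?_⟩
  induction i using WellFoundedLT.induction with
  | ind i ih =>
    let G := below i fun j _ => F j
    have hFi : F i = Classical.epsilon fun a => P i (update G i a) := wellFounded_lt.fix_eq _ i
    have hG (j : ι) (hj : j < i) : G j = F j := dif_pos hj
    have hPG := Classical.epsilon_spec
      (hextend i G fun j hj => hlocal j F G (fun m hm => (hG m (hm.trans_lt hj)).symm) (ih j hj))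
    rw [← hFi] at hPG
    refine hlocal i _ F (fun j hj => ?_) hPG
    obtain rfl | hj := hj.eq_or_lt
    · exact update_self ..
    · rw [update_of_ne hj.ne, hG j hj]

variable {X Y Q : Type*} {S : CubeFamily X} {T : CubeFamily Y} {U : CubeFamily Q} {k : ℕ}

theorem isCubeCorner_iff_inf (hS : S.IsStable) {lam : (Fin k → Bool) → X} :
    IsCubeCorner S lam ↔ ∀ ω, ω ≠ topVtx k → (fun η => lam (η ⊓ ω)) ∈ S.cubes k := by
  have update_eq_inf (η : Fin k → Bool) (i : Fin k) :
      update η i false = η ⊓ update (topVtx k) i false := by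
    funext j
    obtain rfl | hj := eq_or_ne j i
    · simp
    · simp [hj, topVtx]
  constructor
  · intro hlam ω hω
    obtain ⟨i, hi⟩ : ∃ i, ω i = false := by
      simpa [topVtx, funext_iff] using hω
    have inf_update (η : Fin k → Bool) : update (η ⊓ ω) i false = η ⊓ ω := by
      simp [update_eq_self_iff, hi]
    have face : (fun η => lam (update (η ⊓ ω) i false)) ∈ S.cubes k :=
      hS (isDiscreteCubeMorphism_pointwise fun j b => b ⊓ ω j) (hlam i)
    simpa only [inf_update] using face
  · intro h i
    rw [funext fun η => congrArg lam (update_eq_inf η i)]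
    exact h _ fun heq => by simpa [topVtx] using congrFun heq i

theorem exists_update_face_mem (hS : S.IsStable) (hU : U.IsStable) {p : X → Q}
    (hp : ∀ k, HasCompletionAt S U p k) {lam : (Fin k → Bool) → Q} {ω : Fin k → Bool}
    (hlam : (fun η => lam (η ⊓ ω)) ∈ U.cubes k) {mu : (Fin k → Bool) → X}
    (hmu : ∀ η < ω, p (mu η) = lam η ∧ (fun ξ => mu (ξ ⊓ η)) ∈ S.cubes k) :
    ∃ x, p x = lam ω ∧ (fun ξ => update mu ω x (ξ ⊓ ω)) ∈ S.cubes k := by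
  obtain ⟨m, ρ, ψ, hρ, hψ, hψρ, hρψ, hρinf, hρtop⟩ := exists_face_chart ω
  have inf_ω (η : Fin m → Bool) : ρ η ⊓ ω = ρ η := by rw [← hρψ, hψρ]
  have lt_ω (η : Fin m → Bool) (hη : η ≠ topVtx m) : ρ η < ω :=
    (inf_eq_left.1 (inf_ω η)).lt_of_ne (hρtop ▸ hψρ.injective.ne hη)
  have corner : IsCubeCorner S fun η => mu (ρ η) := by
    refine (isCubeCorner_iff_inf hS).2 fun η hη => ?_
    simpa only [hρinf] using hS hρ (hmu _ (lt_ω η hη)).2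
  have image : (fun η => lam (ρ η)) ∈ U.cubes m := by
    simpa only [inf_ω] using hU hρ hlam
  obtain ⟨c, hc, hcmu, hclam⟩ := hp m _ _ corner image fun η hη => (hmu _ (lt_ω η hη)).1
  refine ⟨c (topVtx m), (congrFun hclam _).trans (congrArg lam hρtop), ?_⟩
  convert hS hψ hc using 1
  funext ξ
  rw [← hρψ]
  by_cases htop : ψ ξ = topVtx m
  · rw [htop, hρtop, update_self]
  · rw [update_of_ne (lt_ω _ htop).ne, hcmu _ htop]

theorem IsCubeCorner.exists_lift [Nonempty X] (hS : S.IsStable) (hU : U.IsStable) {p : X → Q}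
    (hp : ∀ k, HasCompletionAt S U p k) {lam : (Fin k → Bool) → Q} (hlam : IsCubeCorner U lam) :
    ∃ mu : (Fin k → Bool) → X, IsCubeCorner S mu ∧ ∀ ω, ω ≠ topVtx k → p (mu ω) = lam ω := by
  obtain ⟨mu, hmu⟩ := exists_forall_of_exists_update
    (P := fun ω (mu : (Fin k → Bool) → X) => ω ≠ topVtx k →
      p (mu ω) = lam ω ∧ (fun ξ => mu (ξ ⊓ ω)) ∈ S.cubes k)
    (fun ω mu nu h hmu hω => by
      simpa only [h ω le_rfl, h _ inf_le_right] using hmu hω)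
    (fun ω mu hmu => by
      by_cases hω : ω = topVtx k
      · exact ⟨Classical.arbitrary X, fun h => absurd hω h⟩
      · obtain ⟨x, hx⟩ := exists_update_face_mem hS hU hp
          ((isCubeCorner_iff_inf hU).1 hlam ω hω) fun η hη => hmu η hη (hη.trans_le le_top).ne
        exact ⟨x, fun _ => by simpa only [update_self] using hx⟩)
  exact ⟨mu, (isCubeCorner_iff_inf hS).2 fun ω hω => (hmu ω hω).2, fun ω hω => (hmu ω hω).1⟩

theorem IsFibration.of_comp [TopologicalSpace X] [TopologicalSpace Y] [TopologicalSpace Q]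
    (hS : S.IsStable) (hU : U.IsStable) {p : X → Q} {g : Q → Y} (hp : IsFibration S U p)
    (hsurj : Surjective p) (hgp : IsFibration S T (g ∘ p)) (hg : IsMorphism U T g) :
    IsFibration U T g := by
  refine ⟨hg, fun k lam c hlam hc hag => ?_⟩
  have : Nonempty X := (hsurj (lam (topVtx k))).nonempty
  obtain ⟨mu, hmu, hmulam⟩ := hlam.exists_lift hS hU hp.2
  obtain ⟨d, hd, hdmu, hdc⟩ := hgp.2 k mu c hmu hc fun ω hω => by
    rw [comp_apply, hmulam ω hω, hag ω hω]
  exact ⟨_, hp.1.2 k d hd, fun ω hω => by rw [hdmu ω hω, hmulam ω hω], hdc⟩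

end CornerLifting

section Quotient

variable {X Y : Type*} {S : CubeFamily X} {T : CubeFamily Y} {f : X → Y} {k s : ℕ}

theorem CubeFamily.IsStable.quotFamilyRel (hS : S.IsStable) (f : X → Y) (s : ℕ) :
    (quotFamilyRel S f s).IsStable := by
  rintro k l ρ hρ _ ⟨c, hc, rfl⟩
  exact ⟨_, hS hρ hc, rfl⟩

theorem IsGluing.relCanonRel_equivalence (hg : IsGluing S) (hS : S.IsStable)
    (hS₀ : S.cubes 0 = univ) (f : X → Y) (s : ℕ) : Equivalence (RelCanonRel S f s) where
  refl x := ⟨.refl hS hS₀ s x, rfl⟩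
  symm h := ⟨h.1.symm, h.2.symm⟩
  trans h h' := ⟨h.1.trans hS hg h'.1, h.2.trans h'.2⟩

theorem IsGluing.quotMk_relCanonRel_eq_iff (hg : IsGluing S) (hS : S.IsStable)
    (hS₀ : S.cubes 0 = univ) {x y : X} :
    Quot.mk (RelCanonRel S f s) x = Quot.mk _ y ↔ RelCanonRel S f s x y :=
  (hg.relCanonRel_equivalence hS hS₀ f s).quot_mk_eq_iff x y

theorem IsGluing.hasCompletionAt_quotMk_of_le (hg : IsGluing S) (hS : S.IsStable)
    (hS₀ : S.cubes 0 = univ) (hk : k ≤ s + 1) :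
    HasCompletionAt S (quotFamilyRel S f s) (Quot.mk (RelCanonRel S f s)) k := by
  rintro lam _ - ⟨c, hc, rfl⟩ hag
  have hlift (ω : Fin k → Bool) : Quot.mk (RelCanonRel S f s)
      (update lam (topVtx k) (c (topVtx k)) ω) = Quot.mk _ (c ω) := by
    obtain rfl | hω := eq_or_ne ω (topVtx k)
    · rw [update_self]
    · rw [update_of_ne hω, hag ω hω]
  refine ⟨_, hg.mem_cubes_of_canonRel hS hS₀ hk hc fun ω => ?_,
    fun ω hω => update_of_ne hω .., funext hlift⟩
  exact ((hg.quotMk_relCanonRel_eq_iff hS hS₀).1 (hlift ω)).1.symm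

theorem IsGluing.quotMk_eq_of_eq_off_topVtx (hg : IsGluing S) (hS : S.IsStable)
    (hS₀ : S.cubes 0 = univ) (hk : s + 1 ≤ k) {c c' : (Fin k → Bool) → X} (hc : c ∈ S.cubes k)
    (hc' : c' ∈ S.cubes k)
    (hag : ∀ ω, ω ≠ topVtx k → Quot.mk (RelCanonRel S f s) (c ω) = Quot.mk _ (c' ω))
    (hf : ∀ ω, f (c ω) = f (c' ω)) (ω : Fin k → Bool) :
    Quot.mk (RelCanonRel S f s) (c ω) = Quot.mk _ (c' ω) := by
  obtain rfl | hω := eq_or_ne ω (topVtx k)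
  · refine Quot.sound ⟨hg.canonRel_topVtx hS hS₀ hk hc hc' fun η hη => ?_, hf _⟩
    exact ((hg.quotMk_relCanonRel_eq_iff hS hS₀).1 (hag η hη)).1
  · exact hag ω hω

theorem IsGluing.hasUniquenessAt_quotLift (hg : IsGluing S) (hS : S.IsStable)
    (hS₀ : S.cubes 0 = univ) (hk : s + 1 ≤ k) :
    HasUniquenessAt (quotFamilyRel S f s) T (Quot.lift f fun _ _ h => h.2) k := by
  rintro _ ⟨c, hc, rfl⟩ _ ⟨c', hc', rfl⟩ hag hf
  exact funext (hg.quotMk_eq_of_eq_off_topVtx hS hS₀ hk hc hc' hag (congrFun hf))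

theorem IsGluing.isFibration_quotMk [TopologicalSpace X] [TopologicalSpace Y] (hg : IsGluing S)
    (hS : S.IsStable) (hS₀ : S.cubes 0 = univ) (hf : IsFibration S T f) (s : ℕ) :
    IsFibration S (quotFamilyRel S f s) (Quot.mk (RelCanonRel S f s)) := by
  refine ⟨⟨continuous_quot_mk, fun k c hc => ⟨c, hc, rfl⟩⟩, fun k => ?_⟩
  obtain hk | hk := le_total k (s + 1)
  · exact hg.hasCompletionAt_quotMk_of_le hS hS₀ hk
  rintro lam _ hlam ⟨c, hc, rfl⟩ hag
  obtain ⟨d, hd, hdlam, hfd⟩ := hf.2 k lam _ hlam (hf.1.2 k c hc) fun ω hω =>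
    ((hg.quotMk_relCanonRel_eq_iff hS hS₀).1 (hag ω hω)).2
  refine ⟨d, hd, hdlam, funext ?_⟩
  exact hg.quotMk_eq_of_eq_off_topVtx hS hS₀ hk hd hc (fun ω hω => by rw [hdlam ω hω, hag ω hω])
    (congrFun hfd)

end Quotient

theorem canonical_s_fibration_factor_general {X Y : Type*} [TopologicalSpace X]
    [TopologicalSpace Y] (S : CubeFamily X) (T : CubeFamily Y) (hS : S.IsStable)
    (hS₀ : S.cubes 0 = univ) (hgS : IsGluing S) (f : X → Y) (hf : IsFibration S T f) (s : ℕ) :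
    IsFibration S (quotFamilyRel S f s) (Quot.mk (RelCanonRel S f s)) ∧
    IsFibration (quotFamilyRel S f s) T (Quot.lift f fun _ _ h => h.2) ∧
    HasUniquenessAt (quotFamilyRel S f s) T (Quot.lift f fun _ _ h => h.2) (s + 1) := by
  have hπ := hgS.isFibration_quotMk hS hS₀ hf s
  have hg : IsMorphism (quotFamilyRel S f s) T (Quot.lift f fun _ _ h => h.2) := by
    refine ⟨continuous_quot_lift _ hf.1.1, ?_⟩
    rintro k _ ⟨c, hc, rfl⟩
    exact hf.1.2 k c hc
  exact ⟨hπ, .of_comp hS (hS.quotFamilyRel f s) hπ Quot.mk_surjective hf hg,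
    hgS.hasUniquenessAt_quotLift hS hS₀ le_rfl⟩

/-- let `f : X → Y` be a fibration between compact gluing cubespaces and
`s ≥ 0`.  Then the projection `π_{f,s} : X → X/∼_{f,s}` is a fibration, and `f` factors
through the induced map `g : X/∼_{f,s} → Y` (so `f = g ∘ π_{f,s}`), which is an
`s`-fibration, i.e. a fibration with `(s+1)`-uniqueness. -/
theorem canonical_s_fibration_factor {X Y : Type*} [MetricSpace X] [MetricSpace Y]
    [CompactSpace X] [CompactSpace Y]
    (S : CubeFamily X) (T : CubeFamily Y) (hS : S.IsCubespace) (hT : T.IsCubespace)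
    (hgS : IsGluing S) (hgT : IsGluing T)
    (f : X → Y) (hf : IsFibration S T f) (s : ℕ) :
    IsFibration S (quotFamilyRel S f s) (Quot.mk (RelCanonRel S f s)) ∧
    IsFibration (quotFamilyRel S f s) T (Quot.lift f fun _ _ h => h.2) ∧
    HasUniquenessAt (quotFamilyRel S f s) T (Quot.lift f fun _ _ h => h.2) (s + 1) :=
  canonical_s_fibration_factor_general S T (fun _ _ ρ hρ => hS.2.2 ρ hρ) hS.2.1 hgS f hf s
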